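/- Mass and energy of Rayleigh–Jeans spectra: let M₀, E₀ > 0. There exist β, γ ∈ (0,∞) such that ∫₀^{2π} 1/(βω(p)+γ) dp = M₀ and ∫₀^{2π} ω(p)/(βω(p)+γ) dp = E₀ if and only if E₀/M₀ < 2/π. Moreover, when this condition holds, the pair (β,γ) is unique. -/

import Mathlib

open MeasureTheory Real Set

noncomputable section

/-- The dispersion relation `ω(p) = |sin(p/2)|`. -/
def ω (p : ℝ) : ℝ := |Real.sin (p / 2)|

/-- Parameterization `h(x,z)` of the resonant manifold. -/
def resH (x z : ℝ) : ℝ :=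
  (z - x) / 2 + 2 * Real.arcsin (Real.tan (|z - x| / 4) * Real.cos ((x + z) / 4))

/-- `F₊(x,z) = (cos(x/2)+cos(z/2))² + 4 sin(x/2) sin(z/2)`. -/
def Fplus (x z : ℝ) : ℝ :=
  (Real.cos (x / 2) + Real.cos (z / 2)) ^ 2 + 4 * Real.sin (x / 2) * Real.sin (z / 2)

/-- `F₋(x,z) = (cos(x/2)+cos(z/2))² − 4 sin(x/2) sin(z/2)`. -/
def Fminus (x z : ℝ) : ℝ :=
  (Real.cos (x / 2) + Real.cos (z / 2)) ^ 2 - 4 * Real.sin (x / 2) * Real.sin (z / 2)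

/-!
Let `M`, `E` be the mass and energy of `1 / (β w + γ)` for a dispersion relation `w ≥ 0` on a finite
measure space `(X, μ)`. Then `(β₂ - β₁) (E₁ - E₂) + (γ₂ - γ₁) (M₁ - M₂)` is the integral of
`((β₂ w + γ₂) - (β₁ w + γ₁))² / ((β₁ w + γ₁) (β₂ w + γ₂))`, hence positive for distinct
parameters unless `w` is constant. So mass and energy determine the parameters, and comparing
`(β, γ)` with the flat spectrum `β = 0` of the same mass bounds `E / M` by the mean of `w`.
Conversely, `E / M` depends only on `t = β / γ`; it is continuous, equals the mean of `w` at
`t = 0`, and takes arbitrarily small values, because `β E ≤ μ(X)` while `M` blows up as `γ → 0`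
whenever `1 / w` has infinite integral. The intermediate value theorem then yields every ratio
below the mean. For `ω` on `[0, 2π]` the mean is `2 / π`, and `1 / ω` is not integrable near `0`.
-/

open Filter Topology

section RayleighJeans

variable {X : Type*} [MeasurableSpace X]

/-- The mass of the Rayleigh–Jeans equilibrium `1 / (β w + γ)` with dispersion relation `w`, with
momentum space modelled by an arbitrary measure space `(X, μ)`. -/
def rjMass (μ : Measure X) (w : X → ℝ) (β γ : ℝ) : ℝ := ∫ x, 1 / (β * w x + γ) ∂μ

/-- The energy of the Rayleigh–Jeans equilibrium `1 / (β w + γ)` with dispersion relation `w`, with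
momentum space modelled by an arbitrary measure space `(X, μ)`. -/
def rjEnergy (μ : Measure X) (w : X → ℝ) (β γ : ℝ) : ℝ := ∫ x, w x / (β * w x + γ) ∂μ

variable {μ : Measure X} {w : X → ℝ} {β γ β₁ γ₁ β₂ γ₂ : ℝ}

lemma rjMass_zero_left : rjMass μ w 0 γ = μ.real univ / γ := by
  simp [rjMass, div_eq_mul_inv]

lemma rjEnergy_zero_left : rjEnergy μ w 0 γ = (∫ x, w x ∂μ) / γ := by
  simp [rjEnergy, integral_div]

lemma rjMass_mul_mul (c : ℝ) : rjMass μ w (c * β) (c * γ) = rjMass μ w β γ / c := by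
  simp only [rjMass, ← integral_div]
  congr with x
  rw [div_div]
  ring_nf

lemma rjEnergy_mul_mul (c : ℝ) : rjEnergy μ w (c * β) (c * γ) = rjEnergy μ w β γ / c := by
  simp only [rjEnergy, ← integral_div]
  congr with x
  rw [div_div]
  ring_nf

lemma norm_one_div_mul_add_le {a : ℝ} (ha : 0 ≤ a) (hβ : 0 ≤ β) (hγ : 0 < γ) :
    ‖1 / (β * a + γ)‖ ≤ 1 / γ := by
  rw [Real.norm_of_nonneg (by positivity)]
  gcongr
  exact le_add_of_nonneg_left (by positivity)

lemma norm_div_mul_add_le {a : ℝ} (ha : 0 ≤ a) (hβ : 0 ≤ β) (hγ : 0 < γ) :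
    ‖a / (β * a + γ)‖ ≤ a / γ := by
  rw [Real.norm_of_nonneg (by positivity)]
  gcongr
  exact le_add_of_nonneg_left (by positivity)

lemma ae_one_div_mul_add_pos (hw₀ : 0 ≤ᵐ[μ] w) (hβ : 0 ≤ β) (hγ : 0 < γ) :
    ∀ᵐ x ∂μ, 0 < 1 / (β * w x + γ) := by
  filter_upwards [hw₀] with x (hx : 0 ≤ w x)
  positivity

lemma rjMass_nonneg (hw₀ : 0 ≤ᵐ[μ] w) (hβ : 0 ≤ β) (hγ : 0 < γ) : 0 ≤ rjMass μ w β γ :=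
  integral_nonneg_of_ae ((ae_one_div_mul_add_pos hw₀ hβ hγ).mono fun _ => le_of_lt)

lemma not_eventuallyConst_of_lintegral_inv_eq_top [IsFiniteMeasure μ] (hw₀ : 0 ≤ᵐ[μ] w)
    (hw_ne : ¬ w =ᵐ[μ] 0) (hw_inv : ∫⁻ x, (ENNReal.ofReal (w x))⁻¹ ∂μ = ⊤) :
    ¬ EventuallyConst w (ae μ) := by
  rw [eventuallyConst_iff_exists_eventuallyEq]
  rintro ⟨c, hc⟩
  have hc_nonpos : c ≤ 0 := by
    by_contra! hc_pos
    have hinv : ∀ᵐ x ∂μ, (ENNReal.ofReal (w x))⁻¹ = (ENNReal.ofReal c)⁻¹ :=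
      hc.mono fun x hx => by rw [hx]
    rw [lintegral_congr_ae hinv, lintegral_const] at hw_inv
    exact ENNReal.mul_ne_top (by simpa using hc_pos) (measure_ne_top μ univ) hw_inv
  refine hw_ne ?_
  filter_upwards [hw₀, hc] with x (hx : 0 ≤ w x) hxc
  exact le_antisymm (hxc.trans_le hc_nonpos) hx

lemma eq_and_eq_of_mul_add_ae_eq (hw_const : ¬ EventuallyConst w (ae μ))
    (h : ∀ᵐ x ∂μ, β₁ * w x + γ₁ = β₂ * w x + γ₂) : β₁ = β₂ ∧ γ₁ = γ₂ := by
  have hβ : β₁ = β₂ := by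
    by_contra hne
    refine hw_const (eventuallyConst_iff_exists_eventuallyEq.2 ⟨(γ₂ - γ₁) / (β₁ - β₂), ?_⟩)
    filter_upwards [h] with x hx
    rw [eq_div_iff (sub_ne_zero.2 hne)]
    linarith
  have : NeBot (ae μ) := ⟨fun hbot => hw_const (hbot ▸ EventuallyConst.bot)⟩
  obtain ⟨x, hx⟩ := h.exists
  subst hβ
  exact ⟨rfl, add_left_cancel hx⟩

lemma integrable_div_mul_add (hw : Integrable w μ) (hw₀ : 0 ≤ᵐ[μ] w) (hβ : 0 ≤ β) (hγ : 0 < γ) :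
    Integrable (fun x => w x / (β * w x + γ)) μ := by
  refine (hw.div_const γ).mono'
    (hw.aemeasurable.div ((hw.aemeasurable.const_mul β).add_const γ)).aestronglyMeasurable ?_
  filter_upwards [hw₀] with x hx
  exact norm_div_mul_add_le hx hβ hγ

lemma continuousOn_rjEnergy (hw : Integrable w μ) (hw₀ : 0 ≤ᵐ[μ] w) (hγ : 0 < γ) :
    ContinuousOn (fun β => rjEnergy μ w β γ) (Ici 0) := by
  refine continuousOn_of_dominated (bound := fun x => w x / γ)
    (fun β hβ => (integrable_div_mul_add hw hw₀ hβ hγ).aestronglyMeasurable)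
    (fun β hβ => hw₀.mono fun x hx => norm_div_mul_add_le hx hβ hγ) (hw.div_const γ) ?_
  filter_upwards [hw₀] with x (hx : 0 ≤ w x)
  refine continuousOn_const.div (by fun_prop) fun β (hβ : 0 ≤ β) => ?_
  positivity

variable [IsFiniteMeasure μ]

lemma integrable_one_div_mul_add (hw : AEMeasurable w μ) (hw₀ : 0 ≤ᵐ[μ] w) (hβ : 0 ≤ β)
    (hγ : 0 < γ) : Integrable (fun x => 1 / (β * w x + γ)) μ := by
  refine .of_bound (((hw.const_mul β).add_const γ).const_div 1).aestronglyMeasurable (1 / γ) ?_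
  filter_upwards [hw₀] with x hx
  exact norm_one_div_mul_add_le hx hβ hγ

lemma continuousOn_rjMass (hw : AEMeasurable w μ) (hw₀ : 0 ≤ᵐ[μ] w) (hγ : 0 < γ) :
    ContinuousOn (fun β => rjMass μ w β γ) (Ici 0) := by
  refine continuousOn_of_dominated (bound := fun _ => 1 / γ)
    (fun β hβ => (integrable_one_div_mul_add hw hw₀ hβ hγ).aestronglyMeasurable)
    (fun β hβ => hw₀.mono fun x hx => norm_one_div_mul_add_le hx hβ hγ) (integrable_const _) ?_
  filter_upwards [hw₀] with x (hx : 0 ≤ w x)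
  refine continuousOn_const.div (by fun_prop) fun β (hβ : 0 ≤ β) => ?_
  positivity

lemma rjMass_pos [NeZero μ] (hw : AEMeasurable w μ) (hw₀ : 0 ≤ᵐ[μ] w) (hβ : 0 ≤ β) (hγ : 0 < γ) :
    0 < rjMass μ w β γ := by
  have hpos := ae_one_div_mul_add_pos hw₀ hβ hγ
  refine (rjMass_nonneg hw₀ hβ hγ).lt_of_ne' fun hzero => ?_
  rw [rjMass, integral_eq_zero_iff_of_nonneg_ae (hpos.mono fun _ => le_of_lt)
    (integrable_one_div_mul_add hw hw₀ hβ hγ)] at hzero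
  obtain ⟨x, hx_pos, hx_zero⟩ := (hpos.and hzero).exists
  exact hx_pos.ne' hx_zero

lemma mul_rjEnergy_add_mul_rjMass (hw : Integrable w μ) (hw₀ : 0 ≤ᵐ[μ] w) (hβ : 0 ≤ β)
    (hγ : 0 < γ) : β * rjEnergy μ w β γ + γ * rjMass μ w β γ = μ.real univ := by
  have hsum : ∀ᵐ x ∂μ, β * (w x / (β * w x + γ)) + γ * (1 / (β * w x + γ)) = 1 := by
    filter_upwards [hw₀] with x (hx : 0 ≤ w x)
    field_simp
  rw [rjEnergy, rjMass, ← integral_const_mul, ← integral_const_mul,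
    ← integral_add ((integrable_div_mul_add hw hw₀ hβ hγ).const_mul β)
      ((integrable_one_div_mul_add hw.aemeasurable hw₀ hβ hγ).const_mul γ),
    integral_congr_ae hsum, integral_const, smul_eq_mul, mul_one]

lemma mul_rjEnergy_le (hw : Integrable w μ) (hw₀ : 0 ≤ᵐ[μ] w) (hβ : 0 ≤ β) (hγ : 0 < γ) :
    β * rjEnergy μ w β γ ≤ μ.real univ := by
  linarith [mul_rjEnergy_add_mul_rjMass hw hw₀ hβ hγ,
    mul_nonneg hγ.le (rjMass_nonneg hw₀ hβ hγ)]

lemma integrable_and_integral_sq_sub_div_mul (hw : Integrable w μ) (hw₀ : 0 ≤ᵐ[μ] w) (hβ₁ : 0 ≤ β₁)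
    (hγ₁ : 0 < γ₁) (hβ₂ : 0 ≤ β₂) (hγ₂ : 0 < γ₂) :
    Integrable (fun x => ((β₂ * w x + γ₂) - (β₁ * w x + γ₁)) ^ 2 /
      ((β₁ * w x + γ₁) * (β₂ * w x + γ₂))) μ ∧
    ∫ x, ((β₂ * w x + γ₂) - (β₁ * w x + γ₁)) ^ 2 /
      ((β₁ * w x + γ₁) * (β₂ * w x + γ₂)) ∂μ =
    (β₂ - β₁) * (rjEnergy μ w β₁ γ₁ - rjEnergy μ w β₂ γ₂) +
      (γ₂ - γ₁) * (rjMass μ w β₁ γ₁ - rjMass μ w β₂ γ₂) := by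
  have hE₁ := integrable_div_mul_add hw hw₀ hβ₁ hγ₁
  have hE₂ := integrable_div_mul_add hw hw₀ hβ₂ hγ₂
  have hM₁ := integrable_one_div_mul_add hw.aemeasurable hw₀ hβ₁ hγ₁
  have hM₂ := integrable_one_div_mul_add hw.aemeasurable hw₀ hβ₂ hγ₂
  have hE : Integrable (fun x =>
      (β₂ - β₁) * (w x / (β₁ * w x + γ₁) - w x / (β₂ * w x + γ₂))) μ :=
    (hE₁.sub hE₂).const_mul _
  have hM : Integrable (fun x =>
      (γ₂ - γ₁) * (1 / (β₁ * w x + γ₁) - 1 / (β₂ * w x + γ₂))) μ :=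
    (hM₁.sub hM₂).const_mul _
  have hpointwise : ∀ᵐ x ∂μ,
      (β₂ - β₁) * (w x / (β₁ * w x + γ₁) - w x / (β₂ * w x + γ₂)) +
        (γ₂ - γ₁) * (1 / (β₁ * w x + γ₁) - 1 / (β₂ * w x + γ₂)) =
      ((β₂ * w x + γ₂) - (β₁ * w x + γ₁)) ^ 2 / ((β₁ * w x + γ₁) * (β₂ * w x + γ₂)) := by
    filter_upwards [hw₀] with x (hx : 0 ≤ w x)
    field_simp
    ring
  refine ⟨(hE.add hM).congr hpointwise, ?_⟩
  rw [← integral_congr_ae hpointwise, integral_add hE hM, integral_const_mul, integral_const_mul,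
    integral_sub hE₁ hE₂, integral_sub hM₁ hM₂]
  rfl

lemma rjEnergy_rjMass_pairing_pos (hw : Integrable w μ) (hw₀ : 0 ≤ᵐ[μ] w)
    (hw_const : ¬ EventuallyConst w (ae μ)) (hβ₁ : 0 ≤ β₁) (hγ₁ : 0 < γ₁) (hβ₂ : 0 ≤ β₂)
    (hγ₂ : 0 < γ₂) (hne : ¬ (β₁ = β₂ ∧ γ₁ = γ₂)) :
    0 < (β₂ - β₁) * (rjEnergy μ w β₁ γ₁ - rjEnergy μ w β₂ γ₂) +
      (γ₂ - γ₁) * (rjMass μ w β₁ γ₁ - rjMass μ w β₂ γ₂) := by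
  obtain ⟨hint, hpairing⟩ :=
    integrable_and_integral_sq_sub_div_mul hw hw₀ hβ₁ hγ₁ hβ₂ hγ₂
  have hnonneg : 0 ≤ᵐ[μ] fun x => ((β₂ * w x + γ₂) - (β₁ * w x + γ₁)) ^ 2 /
      ((β₁ * w x + γ₁) * (β₂ * w x + γ₂)) := by
    filter_upwards [hw₀] with x (hx : 0 ≤ w x)
    positivity
  rw [← hpairing]
  refine (integral_nonneg_of_ae hnonneg).lt_of_ne' fun hzero =>
    hne (eq_and_eq_of_mul_add_ae_eq hw_const ?_)
  filter_upwards [hw₀, (integral_eq_zero_iff_of_nonneg_ae hnonneg hint).1 hzero]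
    with x (hx : 0 ≤ w x) hx_zero
  have hden : (β₁ * w x + γ₁) * (β₂ * w x + γ₂) ≠ 0 := by positivity
  exact (sub_eq_zero.1 (sq_eq_zero_iff.1 ((div_eq_zero_iff.1 hx_zero).resolve_right hden))).symm

lemma eq_and_eq_of_rjMass_eq_of_rjEnergy_eq (hw : Integrable w μ) (hw₀ : 0 ≤ᵐ[μ] w)
    (hw_const : ¬ EventuallyConst w (ae μ)) (hβ₁ : 0 ≤ β₁) (hγ₁ : 0 < γ₁) (hβ₂ : 0 ≤ β₂)
    (hγ₂ : 0 < γ₂) (hM : rjMass μ w β₁ γ₁ = rjMass μ w β₂ γ₂)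
    (hE : rjEnergy μ w β₁ γ₁ = rjEnergy μ w β₂ γ₂) : β₁ = β₂ ∧ γ₁ = γ₂ := by
  by_contra hne
  simpa [hM, hE] using rjEnergy_rjMass_pairing_pos hw hw₀ hw_const hβ₁ hγ₁ hβ₂ hγ₂ hne

lemma rjEnergy_div_rjMass_lt_average [NeZero μ] (hw : Integrable w μ) (hw₀ : 0 ≤ᵐ[μ] w)
    (hw_const : ¬ EventuallyConst w (ae μ)) (hβ : 0 < β) (hγ : 0 < γ) :
    rjEnergy μ w β γ / rjMass μ w β γ < ⨍ x, w x ∂μ := by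
  have hM := rjMass_pos hw.aemeasurable hw₀ hβ.le hγ
  have hμ : 0 < μ.real univ := measureReal_univ_pos
  set γ₀ := μ.real univ / rjMass μ w β γ with hγ₀
  have hpairing := rjEnergy_rjMass_pairing_pos hw hw₀ hw_const hβ.le hγ le_rfl
    (div_pos hμ hM : 0 < γ₀) fun h => hβ.ne' h.1
  have hmass : rjMass μ w 0 γ₀ = rjMass μ w β γ := by
    rw [rjMass_zero_left, hγ₀, div_div_cancel₀ hμ.ne']
  have henergy : rjEnergy μ w 0 γ₀ = (⨍ x, w x ∂μ) * rjMass μ w β γ := by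
    rw [rjEnergy_zero_left, average_eq, smul_eq_mul, hγ₀]
    field_simp
  rw [hmass, henergy, sub_self, mul_zero, add_zero, zero_sub, neg_mul, neg_pos] at hpairing
  rw [div_lt_iff₀ hM]
  exact sub_neg.1 (neg_of_mul_neg_right hpairing hβ.le)

lemma lintegral_inv_ofReal_mul_add (hw : AEMeasurable w μ) (hw₀ : 0 ≤ᵐ[μ] w) (hβ : 0 ≤ β)
    (hγ : 0 < γ) :
    ∫⁻ x, (ENNReal.ofReal (β * w x + γ))⁻¹ ∂μ = ENNReal.ofReal (rjMass μ w β γ) := by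
  rw [rjMass, ofReal_integral_eq_lintegral_ofReal (integrable_one_div_mul_add hw hw₀ hβ hγ)
    ((ae_one_div_mul_add_pos hw₀ hβ hγ).mono fun _ => le_of_lt)]
  refine lintegral_congr_ae ?_
  filter_upwards [hw₀] with x (hx : 0 ≤ w x)
  rw [one_div, ENNReal.ofReal_inv_of_pos (by positivity)]

lemma exists_lt_rjMass (hw : AEMeasurable w μ) (hw₀ : 0 ≤ᵐ[μ] w)
    (hw_inv : ∫⁻ x, (ENNReal.ofReal (w x))⁻¹ ∂μ = ⊤) (C : ℝ) :
    ∃ γ, 0 < γ ∧ C < rjMass μ w 1 γ := by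
  by_contra! hbound
  have hlim : ∀ x, Tendsto (fun γ => (ENNReal.ofReal (1 * w x + γ))⁻¹) (𝓝[>] 0)
      (𝓝 (ENNReal.ofReal (w x))⁻¹) := fun x => by
    have hcont : Continuous fun γ => (ENNReal.ofReal (1 * w x + γ))⁻¹ :=
      (ENNReal.continuous_ofReal.comp (continuous_const_add (1 * w x))).inv
    simpa using (hcont.tendsto 0).mono_left nhdsWithin_le_nhds
  have hfatou : ∫⁻ x, (ENNReal.ofReal (w x))⁻¹ ∂μ ≤ ENNReal.ofReal C := calc
    _ = ∫⁻ x, liminf (fun γ => (ENNReal.ofReal (1 * w x + γ))⁻¹) (𝓝[>] 0) ∂μ := by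
      simp only [(hlim _).liminf_eq]
    _ ≤ liminf (fun γ => ∫⁻ x, (ENNReal.ofReal (1 * w x + γ))⁻¹ ∂μ) (𝓝[>] 0) :=
      lintegral_liminf_le' fun γ => ((hw.const_mul 1).add_const γ).ennreal_ofReal.inv
    _ ≤ ENNReal.ofReal C := by
      refine liminf_le_of_frequently_le' (Eventually.frequently ?_)
      filter_upwards [self_mem_nhdsWithin] with γ hγ
      exact (lintegral_inv_ofReal_mul_add hw hw₀ zero_le_one hγ).trans_le
        (ENNReal.ofReal_le_ofReal (hbound γ hγ))
  exact (hfatou.trans_lt ENNReal.ofReal_lt_top).ne hw_inv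

lemma exists_rjEnergy_lt_mul_rjMass (hw : Integrable w μ) (hw₀ : 0 ≤ᵐ[μ] w)
    (hw_inv : ∫⁻ x, (ENNReal.ofReal (w x))⁻¹ ∂μ = ⊤) {r : ℝ} (hr : 0 < r) :
    ∃ t, 0 < t ∧ rjEnergy μ w t 1 < r * rjMass μ w t 1 := by
  obtain ⟨γ, hγ, hmass⟩ := exists_lt_rjMass hw.aemeasurable hw₀ hw_inv (μ.real univ / r)
  have hlt : rjEnergy μ w 1 γ < r * rjMass μ w 1 γ := calc
    rjEnergy μ w 1 γ ≤ μ.real univ := by simpa using mul_rjEnergy_le hw hw₀ zero_le_one hγ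
    _ < r * rjMass μ w 1 γ := (div_lt_iff₀' hr).1 hmass
  have hscaled : rjEnergy μ w (γ⁻¹ * 1) (γ⁻¹ * γ) < r * rjMass μ w (γ⁻¹ * 1) (γ⁻¹ * γ) := by
    rw [rjEnergy_mul_mul, rjMass_mul_mul, ← mul_div_assoc]
    gcongr
  rw [inv_mul_cancel₀ hγ.ne'] at hscaled
  exact ⟨γ⁻¹ * 1, by positivity, hscaled⟩

lemma exists_rjEnergy_eq_mul_rjMass [NeZero μ] (hw : Integrable w μ) (hw₀ : 0 ≤ᵐ[μ] w)
    (hw_inv : ∫⁻ x, (ENNReal.ofReal (w x))⁻¹ ∂μ = ⊤) {r : ℝ} (hr : 0 < r)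
    (hr_lt : r < ⨍ x, w x ∂μ) :
    ∃ t, 0 < t ∧ rjEnergy μ w t 1 = r * rjMass μ w t 1 := by
  obtain ⟨T, hT, hlt_T⟩ := exists_rjEnergy_lt_mul_rjMass hw hw₀ hw_inv hr
  have hlt_zero : r * rjMass μ w 0 1 < rjEnergy μ w 0 1 := by
    rw [average_eq, smul_eq_mul, inv_mul_eq_div, lt_div_iff₀ measureReal_univ_pos] at hr_lt
    simpa only [rjMass_zero_left, rjEnergy_zero_left, div_one] using hr_lt
  have hcont : ContinuousOn (fun t => rjEnergy μ w t 1 - r * rjMass μ w t 1) (Icc 0 T) :=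
    ((continuousOn_rjEnergy hw hw₀ one_pos).sub
      ((continuousOn_rjMass hw.aemeasurable hw₀ one_pos).const_mul r)).mono Icc_subset_Ici_self
  obtain ⟨t, ht, hzero⟩ :=
    intermediate_value_Ioo' hT.le hcont ⟨sub_neg.2 hlt_T, sub_pos.2 hlt_zero⟩
  exact ⟨t, ht.1, sub_eq_zero.1 hzero⟩

lemma exists_rjMass_eq_and_rjEnergy_eq [NeZero μ] (hw : Integrable w μ) (hw₀ : 0 ≤ᵐ[μ] w)
    (hw_inv : ∫⁻ x, (ENNReal.ofReal (w x))⁻¹ ∂μ = ⊤) {M E : ℝ} (hM : 0 < M) (hE : 0 < E)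
    (h : E / M < ⨍ x, w x ∂μ) :
    ∃ β γ, 0 < β ∧ 0 < γ ∧ rjMass μ w β γ = M ∧ rjEnergy μ w β γ = E := by
  obtain ⟨t, ht, hratio⟩ := exists_rjEnergy_eq_mul_rjMass hw hw₀ hw_inv (div_pos hE hM) h
  have hmass := rjMass_pos hw.aemeasurable hw₀ ht.le one_pos
  refine ⟨rjMass μ w t 1 / M * t, rjMass μ w t 1 / M * 1, by positivity, by positivity, ?_, ?_⟩
  · rw [rjMass_mul_mul, div_div_cancel₀ hmass.ne']
  · rw [rjEnergy_mul_mul, hratio]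
    field_simp

theorem stmt19_general (hw : Integrable w μ) (hw₀ : 0 ≤ᵐ[μ] w) (hw_ne : ¬ w =ᵐ[μ] 0)
    (hw_inv : ∫⁻ x, (ENNReal.ofReal (w x))⁻¹ ∂μ = ⊤) (M₀ E₀ : ℝ) (hM : 0 < M₀) (hE : 0 < E₀) :
    ((∃ β γ : ℝ, 0 < β ∧ 0 < γ ∧ rjMass μ w β γ = M₀ ∧ rjEnergy μ w β γ = E₀) ↔
      E₀ / M₀ < ⨍ x, w x ∂μ) ∧
    (E₀ / M₀ < ⨍ x, w x ∂μ →
      ∃! bg : ℝ × ℝ, 0 < bg.1 ∧ 0 < bg.2 ∧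
        rjMass μ w bg.1 bg.2 = M₀ ∧ rjEnergy μ w bg.1 bg.2 = E₀) := by
  have hw_const := not_eventuallyConst_of_lintegral_inv_eq_top hw₀ hw_ne hw_inv
  have : NeZero μ := ⟨by rintro rfl; simp at hw_inv⟩
  refine ⟨⟨?_, exists_rjMass_eq_and_rjEnergy_eq hw hw₀ hw_inv hM hE⟩, fun h => ?_⟩
  · rintro ⟨β, γ, hβ, hγ, rfl, rfl⟩
    exact rjEnergy_div_rjMass_lt_average hw hw₀ hw_const hβ hγ
  · obtain ⟨β, γ, hβ, hγ, hmass, henergy⟩ := exists_rjMass_eq_and_rjEnergy_eq hw hw₀ hw_inv hM hE h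
    refine ⟨(β, γ), ⟨hβ, hγ, hmass, henergy⟩, ?_⟩
    rintro ⟨β', γ'⟩ ⟨hβ', hγ', hmass', henergy'⟩
    exact Prod.ext_iff.2 (eq_and_eq_of_rjMass_eq_of_rjEnergy_eq hw hw₀ hw_const hβ'.le hγ' hβ.le hγ
      (hmass'.trans hmass.symm) (henergy'.trans henergy.symm))

end RayleighJeans

lemma lintegral_Ioc_inv_eq_top {b : ℝ} (hb : 0 < b) :
    ∫⁻ x in Ioc 0 b, (ENNReal.ofReal x)⁻¹ = ⊤ := by
  have hnot : ¬ IntegrableOn (fun x : ℝ => x⁻¹) (Ioc 0 b) := by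
    rw [← intervalIntegrable_iff_integrableOn_Ioc_of_le hb.le, intervalIntegrable_inv_iff]
    simp [hb.ne]
  have hnonneg : 0 ≤ᵐ[volume.restrict (Ioc 0 b)] fun x : ℝ => x⁻¹ :=
    ae_restrict_of_forall_mem measurableSet_Ioc fun x hx => inv_nonneg.2 hx.1.le
  by_contra hne
  refine hnot ⟨measurable_inv.aestronglyMeasurable, ?_⟩
  rw [hasFiniteIntegral_iff_ofReal hnonneg,
    setLIntegral_congr_fun measurableSet_Ioc fun x hx => ENNReal.ofReal_inv_of_pos hx.1]
  exact Ne.lt_top hne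

lemma continuous_omega : Continuous ω := by
  unfold ω
  fun_prop

lemma omega_nonneg (p : ℝ) : 0 ≤ ω p := abs_nonneg _

lemma omega_le_self {p : ℝ} (hp : 0 ≤ p) : ω p ≤ p := calc
  ω p ≤ |p / 2| := abs_sin_le_abs
  _ = p / 2 := abs_of_nonneg (by positivity)
  _ ≤ p := half_le_self hp

lemma integral_omega : ∫ p in (0 : ℝ)..(2 * π), ω p = 4 := by
  have hsin : EqOn ω (fun p => sin (p / 2)) (uIcc 0 (2 * π)) := fun p hp => by
    rw [uIcc_of_le two_pi_pos.le] at hp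
    exact abs_of_nonneg (sin_nonneg_of_nonneg_of_le_pi (by linarith [hp.1]) (by linarith [hp.2]))
  rw [intervalIntegral.integral_congr hsin, intervalIntegral.integral_comp_div sin two_ne_zero,
    zero_div, mul_div_cancel_left₀ π two_ne_zero, integral_sin, cos_zero, cos_pi]
  norm_num

lemma average_omega : ⨍ p in Ioc 0 (2 * π), ω p = 2 / π := by
  rw [setAverage_eq, ← intervalIntegral.integral_of_le two_pi_pos.le, integral_omega,
    volume_real_Ioc_of_le two_pi_pos.le, smul_eq_mul, sub_zero]
  field_simp
  norm_num

lemma integrableOn_omega : IntegrableOn ω (Ioc 0 (2 * π)) :=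
  continuous_omega.integrableOn_Ioc

lemma not_omega_ae_eq_zero : ¬ ω =ᵐ[volume.restrict (Ioc 0 (2 * π))] 0 := fun hzero => by
  have hmean : (0 : ℝ) = 2 / π := by simpa [average_congr hzero] using average_omega
  exact (div_pos two_pos pi_pos).ne hmean

lemma lintegral_inv_omega_eq_top :
    ∫⁻ p in Ioc 0 (2 * π), (ENNReal.ofReal (ω p))⁻¹ = ⊤ := by
  refine top_le_iff.1 ((lintegral_Ioc_inv_eq_top two_pi_pos).symm.trans_le ?_)
  refine setLIntegral_mono' measurableSet_Ioc fun p hp => ?_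
  gcongr
  exact omega_le_self hp.1.le

/-- **Mass and energy of Rayleigh–Jeans spectra:** for `M₀, E₀ > 0`, there exist
`β, γ ∈ (0,∞)` with `∫₀^{2π} dp/(βω(p)+γ) = M₀` and `∫₀^{2π} ω(p) dp/(βω(p)+γ) = E₀`
if and only if `E₀/M₀ < 2/π`; moreover in that case the pair `(β,γ)` is unique. -/
theorem stmt19 (M₀ E₀ : ℝ) (hM : 0 < M₀) (hE : 0 < E₀) :
    ((∃ β γ : ℝ, 0 < β ∧ 0 < γ ∧
        (∫ p in (0:ℝ)..(2 * π), 1 / (β * ω p + γ)) = M₀ ∧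
        (∫ p in (0:ℝ)..(2 * π), ω p / (β * ω p + γ)) = E₀) ↔
      E₀ / M₀ < 2 / π) ∧
    (E₀ / M₀ < 2 / π →
      ∃! bg : ℝ × ℝ, 0 < bg.1 ∧ 0 < bg.2 ∧
        (∫ p in (0:ℝ)..(2 * π), 1 / (bg.1 * ω p + bg.2)) = M₀ ∧
        (∫ p in (0:ℝ)..(2 * π), ω p / (bg.1 * ω p + bg.2)) = E₀) := by
  simpa only [rjMass, rjEnergy, intervalIntegral.integral_of_le two_pi_pos.le, average_omega] using
    stmt19_general integrableOn_omega (.of_forall omega_nonneg) not_omega_ae_eq_zero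
      lintegral_inv_omega_eq_top M₀ E₀ hM hE
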